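/- Let T be a decision tree for a training set (E, λ) and let w be an inner node of T whose rooted subtree contains m inner nodes. Then the tree obtained from T by the single subtree replacement operation at w can also be obtained from T by a sequence of m subtree replacement operations, each applied to an inner node both of whose children are leaves. -/

import Mathlib

/-- The two class labels. -/
inductive Label where
  | blue
  | red
deriving DecidableEq

/-- A decision tree over examples `ι → ℝ` with classes `{blue, red}`:
every inner node carries a feature and a threshold, every leaf a class label.
An example goes to the left child if its value in the node's feature is at most
the threshold, and to the right child otherwise. -/
inductive DTree (ι : Type) where
  | leaf (c : Label)
  | node (feat : ι) (thr : ℝ) (left right : DTree ι)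

namespace DTree

variable {ι : Type}

/-- The class that a decision tree assigns to an example. -/
noncomputable def classify : DTree ι → (ι → ℝ) → Label
  | .leaf c, _ => c
  | .node f t l r, e => if e f ≤ t then l.classify e else r.classify e

/-- The routing path of an example (`false` = left child, `true` = right child);
it is the position of the leaf of the example. -/
noncomputable def route : DTree ι → (ι → ℝ) → List Bool
  | .leaf _, _ => []
  | .node f t l r, e => if e f ≤ t then false :: l.route e else true :: r.route e

/-- The subtree rooted at a position (`none` if the position is not a node). -/
def subtreeAt : DTree ι → List Bool → Option (DTree ι)
  | T, [] => some T
  | .leaf _, _ :: _ => none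
  | .node _ _ l r, b :: p => (if b then r else l).subtreeAt p

/-- Replace the subtree at a given position by another tree. -/
def replaceAt : DTree ι → List Bool → DTree ι → DTree ι
  | _, [], T' => T'
  | .leaf c, _ :: _, _ => .leaf c
  | .node f t l r, b :: p, T' =>
      if b then .node f t l (r.replaceAt p T') else .node f t (l.replaceAt p T') r

/-- The number of inner nodes of a decision tree. -/
def innerCount : DTree ι → ℕ
  | .leaf _ => 0
  | .node _ _ l r => 1 + l.innerCount + r.innerCount

/-- The position `p` is an inner node of `T`. -/
def IsInnerPos (T : DTree ι) (p : List Bool) : Prop :=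
  ∃ f t l r, T.subtreeAt p = some (.node f t l r)

/-- The position `p` is a node of `T`. -/
def IsNodePos (T : DTree ι) (p : List Bool) : Prop :=
  (T.subtreeAt p).isSome

/-- The feature and threshold of the inner node at position `p`. -/
def cutAt (T : DTree ι) (p : List Bool) : Option (ι × ℝ) :=
  match T.subtreeAt p with
  | some (.node f t _ _) => some (f, t)
  | _ => none

/-- The subtree raising operation at position `q` keeping the child in direction `b`:
the subtree rooted at `q` is replaced by the subtree rooted at its `b`-child; it prunes
the node at `q` together with all inner nodes of the subtree rooted at the other child. -/
def raiseAt (T : DTree ι) (q : List Bool) (b : Bool) : DTree ι :=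
  match T.subtreeAt q with
  | some (.node _ _ l r) => T.replaceAt q (if b then r else l)
  | _ => T

end DTree

/-- `E[T,p]`: the examples of `E` whose routing through `T` passes the position `p`. -/
noncomputable def reach {ι : Type} (E : Finset (ι → ℝ)) (T : DTree ι) (p : List Bool) :
    Finset (ι → ℝ) :=
  E.filter fun e => p <+: T.route e

/-- The number of errors of `T` on the training set `(E, lab)`. -/
noncomputable def errCount {ι : Type} (T : DTree ι) (E : Finset (ι → ℝ))
    (lab : (ι → ℝ) → Label) : ℕ :=
  (E.filter fun e => T.classify e ≠ lab e).card

/-- A most frequent label of the labeled set `(E, lab)` (blue in case of a tie). -/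
def majorityLabel {ι : Type} (E : Finset (ι → ℝ)) (lab : (ι → ℝ) → Label) : Label :=
  if (E.filter fun e => lab e = Label.red).card ≤ (E.filter fun e => lab e = Label.blue).card
  then Label.blue else Label.red

/-- One subtree replacement operation: some inner node of `T` is replaced by a leaf
labeled with a most frequent label of the examples reaching it. -/
def ReplStep {ι : Type} (E : Finset (ι → ℝ)) (lab : (ι → ℝ) → Label)
    (T T' : DTree ι) : Prop :=
  ∃ p, T.IsInnerPos p ∧
    T' = T.replaceAt p (.leaf (majorityLabel (reach E T p) lab))

/-- `T` is a reasonable decision tree for `(E, lab)`: every node is reached by some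
example and every leaf carries a most frequent label of the examples reaching it. -/
def Reasonable {ι : Type} (E : Finset (ι → ℝ)) (lab : (ι → ℝ) → Label)
    (T : DTree ι) : Prop :=
  (∀ p, T.IsNodePos p → (reach E T p).Nonempty) ∧
  (∀ p c, T.subtreeAt p = some (.leaf c) → ∀ c' : Label,
    ((reach E T p).filter fun e => lab e = c').card ≤
      ((reach E T p).filter fun e => lab e = c).card)

/-- Apply a sequence of raising operations (given by positions and kept directions). -/
def applySeq {ι : Type} : DTree ι → List (List Bool × Bool) → DTree ι
  | T, [] => T
  | T, (q, b) :: rest => applySeq (T.raiseAt q b) rest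

/-- Each raising operation of the sequence is applied at an inner node. -/
def ValidSeq {ι : Type} : DTree ι → List (List Bool × Bool) → Prop
  | _, [] => True
  | T, (q, b) :: rest => T.IsInnerPos q ∧ ValidSeq (T.raiseAt q b) rest

/-- The total number of inner nodes pruned by a sequence of raising operations. -/
def seqPruned {ι : Type} : DTree ι → List (List Bool × Bool) → ℕ
  | _, [] => 0
  | T, (q, b) :: rest =>
      (match T.subtreeAt q with
        | some (.node _ _ l r) => 1 + DTree.innerCount (if b then l else r)
        | _ => 0) + seqPruned (T.raiseAt q b) rest

/-- `T'` is obtained from `T` by a (possibly empty) sequence of subtree raising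
operations. -/
def RaisedFrom {ι : Type} (T T' : DTree ι) : Prop :=
  ∃ steps, ValidSeq T steps ∧ applySeq T steps = T'

/-- `T'` is obtained from `T` by a sequence of subtree raising operations pruning
exactly `m` inner nodes in total. -/
def RaisedFromPruning {ι : Type} (T : DTree ι) (m : ℕ) (T' : DTree ι) : Prop :=
  ∃ steps, ValidSeq T steps ∧ seqPruned T steps = m ∧ applySeq T steps = T'

/-- Tracking the position of a node through one raising operation: nodes strictly
below the raised node on the discarded side, and the raised node itself, are pruned
(`none`); all other nodes survive at a possibly shifted position. -/
def stepMap (q : List Bool) (b : Bool) (p : List Bool) : Option (List Bool) :=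
  if q <+: p then
    if q ++ [b] <+: p then some (q ++ p.drop (q.length + 1)) else none
  else some p

/-- Tracking the position of a node through a sequence of raising operations. -/
def seqMap : List (List Bool × Bool) → List Bool → Option (List Bool)
  | [], p => some p
  | (q, b) :: rest, p => (stepMap q b p).bind (seqMap rest)

/-- The number of errors of `T` on a multiset of labeled examples. -/
noncomputable def errCountM {ι : Type} (T : DTree ι) (E : Multiset ((ι → ℝ) × Label)) : ℕ :=
  (E.filter fun q => T.classify q.1 ≠ q.2).card

/-- A sequence of subtree replacement operations, each applied to an inner node
both of whose children are leaves (hence each pruning exactly one inner node);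
the count is the number of operations performed. -/
inductive ReplLeafSeq {d : ℕ} (E : Finset (Fin d → ℝ)) (lab : (Fin d → ℝ) → Label) :
    DTree (Fin d) → ℕ → DTree (Fin d) → Prop
  | refl (T : DTree (Fin d)) : ReplLeafSeq E lab T 0 T
  | step {T T'' : DTree (Fin d)} {m : ℕ} (p : List Bool) (f : Fin d) (t : ℝ)
      (a b : Label) :
      T.subtreeAt p = some (.node f t (.leaf a) (.leaf b)) →
      ReplLeafSeq E lab
        (T.replaceAt p (.leaf (majorityLabel (reach E T p) lab))) m T'' →
      ReplLeafSeq E lab T (m + 1) T''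

namespace DTree

variable {ι : Type}

theorem subtreeAt_append {T S : DTree ι} {p : List Bool} (h : T.subtreeAt p = some S)
    (q : List Bool) : T.subtreeAt (p ++ q) = S.subtreeAt q := by
  induction p generalizing T with
  | nil => simp_all [subtreeAt]
  | cons b p ih =>
    cases T with
    | leaf c => simp [subtreeAt] at h
    | node f t l r => simpa [subtreeAt] using ih h

theorem replaceAt_append {T S : DTree ι} {p : List Bool} (h : T.subtreeAt p = some S)
    (q : List Bool) (X : DTree ι) :
    T.replaceAt (p ++ q) X = T.replaceAt p (S.replaceAt q X) := by
  induction p generalizing T with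
  | nil => simp_all [subtreeAt, replaceAt]
  | cons b p ih =>
    cases T with
    | leaf c => simp [subtreeAt] at h
    | node f t l r => cases b <;> simpa [replaceAt] using ih h

theorem subtreeAt_replaceAt {T S : DTree ι} {p : List Bool} (h : T.subtreeAt p = some S)
    (X : DTree ι) : (T.replaceAt p X).subtreeAt p = some X := by
  induction p generalizing T with
  | nil => simp [subtreeAt, replaceAt]
  | cons b p ih =>
    cases T with
    | leaf c => simp [subtreeAt] at h
    | node f t l r => cases b <;> simpa [replaceAt, subtreeAt] using ih h

theorem replaceAt_replaceAt (T : DTree ι) (p : List Bool) (X Y : DTree ι) :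
    (T.replaceAt p X).replaceAt p Y = T.replaceAt p Y := by
  induction p generalizing T with
  | nil => simp [replaceAt]
  | cons b p ih => cases T <;> cases b <;> simp [replaceAt, ih]

theorem replaceAt_of_subtreeAt_eq {T S : DTree ι} {p : List Bool}
    (h : T.subtreeAt p = some S) : T.replaceAt p S = T := by
  induction p generalizing T with
  | nil => simp_all [subtreeAt, replaceAt]
  | cons b p ih =>
    cases T with
    | leaf c => simp [subtreeAt] at h
    | node f t l r => cases b <;> simpa [replaceAt] using ih h

theorem prefix_route_replaceAt {T S : DTree ι} {p : List Bool} (h : T.subtreeAt p = some S)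
    (X : DTree ι) (e : ι → ℝ) : p <+: (T.replaceAt p X).route e ↔ p <+: T.route e := by
  induction p generalizing T with
  | nil => simp
  | cons b p ih =>
    cases T with
    | leaf c => simp [subtreeAt] at h
    | node f t l r =>
      have := ih h
      cases b <;> by_cases he : e f ≤ t <;> simp_all [replaceAt, route, -not_le]

end DTree

theorem reach_replaceAt {ι : Type} (E : Finset (ι → ℝ)) {T S : DTree ι} {p : List Bool}
    (h : T.subtreeAt p = some S) (X : DTree ι) : reach E (T.replaceAt p X) p = reach E T p := by
  simp [reach, DTree.prefix_route_replaceAt h]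

theorem ReplLeafSeq.trans {d : ℕ} {E : Finset (Fin d → ℝ)} {lab : (Fin d → ℝ) → Label}
    {T T' T'' : DTree (Fin d)} {m n : ℕ} (h : ReplLeafSeq E lab T m T')
    (h' : ReplLeafSeq E lab T' n T'') : ReplLeafSeq E lab T (m + n) T'' := by
  induction h with
  | refl => simpa using h'
  | step p f t a b hp _ ih =>
    rw [Nat.add_right_comm]
    exact .step p f t a b hp (ih h')

/-- If both subtrees below an inner node can be collapsed to leaves, so can the node itself. -/
theorem ReplLeafSeq.collapse_node {d : ℕ} {E : Finset (Fin d → ℝ)}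
    {lab : (Fin d → ℝ) → Label} {T : DTree (Fin d)} {w : List Bool} {f : Fin d} {t : ℝ}
    {l r : DTree (Fin d)} (hw : T.subtreeAt w = some (.node f t l r))
    (hl : ∀ (T : DTree (Fin d)) (p : List Bool), T.subtreeAt p = some l →
      ∃ c, ReplLeafSeq E lab T l.innerCount (T.replaceAt p (.leaf c)))
    (hr : ∀ (T : DTree (Fin d)) (p : List Bool), T.subtreeAt p = some r →
      ∃ c, ReplLeafSeq E lab T r.innerCount (T.replaceAt p (.leaf c))) :
    ReplLeafSeq E lab T (DTree.node f t l r).innerCount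
      (T.replaceAt w (.leaf (majorityLabel (reach E T w) lab))) := by
  obtain ⟨a, ha⟩ := hl T (w ++ [false]) (by
    rw [DTree.subtreeAt_append hw]; simp [DTree.subtreeAt])
  rw [DTree.replaceAt_append hw] at ha
  have hw' := DTree.subtreeAt_replaceAt hw (.node f t (.leaf a) r)
  obtain ⟨b, hb⟩ := hr _ (w ++ [true]) (by
    rw [DTree.subtreeAt_append hw']; simp [DTree.subtreeAt])
  rw [DTree.replaceAt_append hw', DTree.replaceAt_replaceAt] at hb
  have hab := DTree.subtreeAt_replaceAt hw (.node f t (.leaf a) (.leaf b))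
  have last := ReplLeafSeq.step (E := E) (lab := lab) w f t a b hab (.refl _)
  rw [DTree.replaceAt_replaceAt, reach_replaceAt E hw] at last
  simp only [DTree.replaceAt, Bool.false_eq_true, if_false, if_true] at ha hb
  have key := (ha.trans hb).trans last
  rwa [show (DTree.node f t l r).innerCount = l.innerCount + r.innerCount + (0 + 1) by
    simp only [DTree.innerCount]; omega]

theorem ReplLeafSeq.exists_collapse {d : ℕ} (E : Finset (Fin d → ℝ))
    (lab : (Fin d → ℝ) → Label) (S T : DTree (Fin d)) (p : List Bool)
    (h : T.subtreeAt p = some S) :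
    ∃ c, ReplLeafSeq E lab T S.innerCount (T.replaceAt p (.leaf c)) := by
  induction S generalizing T p with
  | leaf c =>
    refine ⟨c, ?_⟩
    rw [DTree.replaceAt_of_subtreeAt_eq h]
    exact .refl T
  | node f t l r ihl ihr => exact ⟨_, .collapse_node h ihl ihr⟩

/-- Let `T` be a decision tree for `(E, lab)` and `w` an inner
node of `T` whose rooted subtree contains `m` inner nodes. Then the tree obtained
from `T` by the single subtree replacement operation at `w` can also be obtained
from `T` by a sequence of `m` subtree replacement operations, each applied to an
inner node both of whose children are leaves. -/
theorem stmt16 {d : ℕ} (E : Finset (Fin d → ℝ)) (lab : (Fin d → ℝ) → Label)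
    (T : DTree (Fin d)) (w : List Bool) (f : Fin d) (t : ℝ) (l r : DTree (Fin d))
    (hw : T.subtreeAt w = some (.node f t l r)) :
    ReplLeafSeq E lab T ((DTree.node f t l r).innerCount)
      (T.replaceAt w (.leaf (majorityLabel (reach E T w) lab))) := by
  exact .collapse_node hw (ReplLeafSeq.exists_collapse E lab l)
    (ReplLeafSeq.exists_collapse E lab r)
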